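/- Let Q be a well-formed formula and let N be a Q-complete, Q-consistent extension of the implicational propositional calculus, with v_N defined by v_N(A) = 1 when QQA ∈ T(N) and v_N(A) = 0 when QA ∈ T(N). For all wfs A, B: if v_N(A) = 0 or v_N(B) = 1 then v_N(A ⊃ B) = 1. -/

import Mathlib

/-- Well-formed formulas of the implicational propositional calculus:
propositional variables (indexed by ℕ, so the set of wfs is countable)
and the single connective ⊃. -/
inductive Wf where
  | var : ℕ → Wf
  | imp : Wf → Wf → Wf
deriving DecidableEq

infixr:60 " ⊃' " => Wf.imp

/-- `Deduces Γ A` : `A` is deducible from the set `Γ` of extra axioms/hypotheses,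
using the three axiom schemes of IPC (including the Peirce scheme) and modus ponens.
Theorems of IPC are `Deduces ∅ A`; for an extension `M` of IPC with extra-axiom
set `E`, `T(M)` is `Deduces E`, and deducibility from hypotheses `Γ` in `M` is
`Deduces (E ∪ Γ)`. -/
inductive Deduces : Set Wf → Wf → Prop where
  | hyp : ∀ {Γ : Set Wf} {A : Wf}, A ∈ Γ → Deduces Γ A
  | ax1 : ∀ {Γ : Set Wf} (A B : Wf), Deduces Γ (A ⊃' (B ⊃' A))
  | ax2 : ∀ {Γ : Set Wf} (A B C : Wf),
      Deduces Γ ((A ⊃' (B ⊃' C)) ⊃' ((A ⊃' B) ⊃' (A ⊃' C)))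
  | peirce : ∀ {Γ : Set Wf} (A B : Wf), Deduces Γ (((A ⊃' B) ⊃' A) ⊃' A)
  | mp : ∀ {Γ : Set Wf} {A B : Wf}, Deduces Γ (A ⊃' B) → Deduces Γ A → Deduces Γ B

theorem Deduces.syl {E : Set Wf} {X Y Z : Wf} (h1 : Deduces E (X ⊃' Y))
    (h2 : Deduces E (Y ⊃' Z)) : Deduces E (X ⊃' Z) :=
  .mp (.mp (.ax2 X Y Z) (.mp (.ax1 _ _) h2)) h1

/-- Let N (extra axioms E) be a Q-complete, Q-consistent extension of IPC and
let v = v_N be defined by v(A) = 1 when QQA ∈ T(N) and v(A) = 0 when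
QA ∈ T(N).  If v(A) = 0 or v(B) = 1 then v(A ⊃ B) = 1. -/
theorem stmt_15 (Q : Wf) (E : Set Wf)
    (hcomplete : ∀ A : Wf, Deduces E ((A ⊃' Q) ⊃' Q) ∨ Deduces E (A ⊃' Q))
    (hcons : ¬ Deduces E Q)
    (v : Wf → ℕ)
    (hv1 : ∀ A : Wf, Deduces E ((A ⊃' Q) ⊃' Q) → v A = 1)
    (hv0 : ∀ A : Wf, Deduces E (A ⊃' Q) → v A = 0) :
    ∀ A B : Wf, (v A = 0 ∨ v B = 1) → v (A ⊃' B) = 1 := by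
  intro A B h
  rcases hcomplete (A ⊃' B) with h1 | h1
  · exact hv1 _ h1
  exfalso
  apply hcons
  rcases h with h | h
  · rcases hcomplete A with h2 | h2
    · have := hv1 _ h2
      omega
    · have h3 : Deduces E ((Q ⊃' B) ⊃' ((A ⊃' Q) ⊃' (A ⊃' B))) :=
        Deduces.syl (.ax1 _ A) (.ax2 A Q B)
      have h4 : Deduces E ((Q ⊃' B) ⊃' (A ⊃' B)) :=
        .mp (.mp (.ax2 _ _ _) h3) (.mp (.ax1 _ _) h2)
      exact .mp (.peirce Q B) (h4.syl h1)
  · rcases hcomplete B with h2 | h2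
    · exact .mp h2 (Deduces.syl (.ax1 B A) h1)
    · have := hv0 _ h2
      omega
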